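/- (Recursive formula for ∞-adic multiple zeta star values.) Let r ≥ 1 and m_1,…,m_r ∈ ℤ_{≥0}. Then in A: ζ_∞⋆(−m_1,…,−m_r) = Σ_{l=0}^{r} (−1)^l · ζ⋆_{<d}(−m_{l+1},…,−m_r) · [ Σ_{(a_1,…,a_l)} v^{a_1+⋯+a_l} · ζ_{<d}(−(m_1−a_1)) ⋯ ζ_{<d}(−(m_l−a_l)) · C(m_1,a_1) ⋯ C(m_l,a_l) · ζ_∞⋆(−a_1,…,−a_l) ], where the inner sum runs over all integer tuples (a_1,…,a_l) with 0 ≤ a_j < m_j and (q−1) | (m_j − a_j) for all 1 ≤ j ≤ l (an empty sum if some m_j = 0 for j ≤ l), and the l = 0 summand is ζ⋆_{<d}(−m_1,…,−m_r). -/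

import Mathlib

open Polynomial

/-- The power sum `S_i(-m)`: the sum of `n ^ m` over monic polynomials `n` of degree `i`. -/
noncomputable def powerSum (F : Type*) [Field F] [Fintype F] (i m : ℕ) : Polynomial F :=
  ∑ᶠ n ∈ {n : Polynomial F | n.Monic ∧ n.natDegree = i}, n ^ m

/-- The restricted power sum `S̃_i(-m)`: the sum of `n ^ m` over monic polynomials `n` of
degree `i` not divisible by `v`. -/
noncomputable def powerSumV (F : Type*) [Field F] [Fintype F] (v : Polynomial F) (i m : ℕ) :
    Polynomial F :=
  ∑ᶠ n ∈ {n : Polynomial F | n.Monic ∧ n.natDegree = i ∧ ¬ v ∣ n}, n ^ m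

/-- `ζ_∞(-m_1, …, -m_r)`, the ∞-adic multiple zeta value at nonpositive integers:
the sum over `i_1 > ⋯ > i_r ≥ 0` of `S_{i_1}(-m_1) ⋯ S_{i_r}(-m_r)`.
Only `m 0, …, m (r-1)` are used.  The depth-0 value is `1`. -/
noncomputable def zetaInf (F : Type*) [Field F] [Fintype F] (r : ℕ) (m : ℕ → ℕ) :
    Polynomial F :=
  ∑ᶠ i ∈ {i : Fin r → ℕ | StrictAnti i}, ∏ j : Fin r, powerSum F (i j) (m (j : ℕ))

/-- `ζ⋆_∞(-m_1, …, -m_r)`, the ∞-adic multiple zeta star value at nonpositive integers: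
the sum over `i_1 ≥ ⋯ ≥ i_r ≥ 0` of `S_{i_1}(-m_1) ⋯ S_{i_r}(-m_r)`. -/
noncomputable def zetaInfStar (F : Type*) [Field F] [Fintype F] (r : ℕ) (m : ℕ → ℕ) :
    Polynomial F :=
  ∑ᶠ i ∈ {i : Fin r → ℕ | Antitone i}, ∏ j : Fin r, powerSum F (i j) (m (j : ℕ))

/-- `ζ_v(-m_1, …, -m_r)`, the v-adic multiple zeta value at nonpositive integers. -/
noncomputable def zetaV (F : Type*) [Field F] [Fintype F] (v : Polynomial F) (r : ℕ)
    (m : ℕ → ℕ) : Polynomial F :=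
  ∑ᶠ i ∈ {i : Fin r → ℕ | StrictAnti i}, ∏ j : Fin r, powerSumV F v (i j) (m (j : ℕ))

/-- `ζ⋆_v(-m_1, …, -m_r)`, the v-adic multiple zeta star value at nonpositive integers. -/
noncomputable def zetaVStar (F : Type*) [Field F] [Fintype F] (v : Polynomial F) (r : ℕ)
    (m : ℕ → ℕ) : Polynomial F :=
  ∑ᶠ i ∈ {i : Fin r → ℕ | Antitone i}, ∏ j : Fin r, powerSumV F v (i j) (m (j : ℕ))

/-- `ζ_{<d}(-m_1, …, -m_r)`, the truncated multiple zeta value: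
the sum over `d > i_1 > ⋯ > i_r ≥ 0` of `S_{i_1}(-m_1) ⋯ S_{i_r}(-m_r)`. -/
noncomputable def zetaLt (F : Type*) [Field F] [Fintype F] (d r : ℕ) (m : ℕ → ℕ) :
    Polynomial F :=
  ∑ᶠ i ∈ {i : Fin r → ℕ | StrictAnti i ∧ ∀ j, i j < d},
    ∏ j : Fin r, powerSum F (i j) (m (j : ℕ))

/-- `ζ⋆_{<d}(-m_1, …, -m_r)`, the truncated multiple zeta star value. -/
noncomputable def zetaLtStar (F : Type*) [Field F] [Fintype F] (d r : ℕ) (m : ℕ → ℕ) :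
    Polynomial F :=
  ∑ᶠ i ∈ {i : Fin r → ℕ | Antitone i ∧ ∀ j, i j < d},
    ∏ j : Fin r, powerSum F (i j) (m (j : ℕ))

/-- `ζ_{<d}(-m)`, the depth-one truncated zeta value `Σ_{d > i ≥ 0} S_i(-m)`. -/
noncomputable def zetaLtOne (F : Type*) [Field F] [Fintype F] (d m : ℕ) : Polynomial F :=
  ∑ᶠ i ∈ {i : ℕ | i < d}, powerSum F i m

theorem finsum_mem_biUnion_image {α β ι M : Type*} [AddCommMonoid M] {s : Set α} (f : α → M)
    (I : Finset ι) (t : ι → Set β) {e : ι → β → α} (he : Function.Injective2 e)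
    (hs : s = ⋃ x ∈ (I : Set ι), e x '' t x) (ht : ∀ x ∈ I, (t x).Finite) :
    ∑ᶠ a ∈ s, f a = ∑ x ∈ I, ∑ᶠ b ∈ t x, f (e x b) := by
  rw [hs, finsum_mem_biUnion, finsum_mem_coe_finset]
  · exact Finset.sum_congr rfl fun x _ => finsum_mem_image (he.right x).injOn
  · rintro x - y - hxy
    refine Set.disjoint_left.2 ?_
    rintro _ ⟨b, -, rfl⟩ ⟨c, -, h⟩
    exact hxy (he h).1.symm
  · exact I.finite_toSet
  · exact fun x hx => (ht x hx).image _

/-- The sum of `f 0 k₀ * ⋯ * f (r - 1) kᵣ₋₁` over chains `n > k₀ ≥ k₁ ≥ ⋯ ≥ kᵣ₋₁ ≥ 0`. -/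
def chainSum {R : Type*} [CommSemiring R] : ℕ → (ℕ → ℕ → R) → ℕ → R
  | 0, _, _ => 1
  | r + 1, f, n => ∑ k ∈ Finset.range n, f 0 k * chainSum r (fun j => f (j + 1)) (k + 1)

theorem antitone_cons_iff {r k : ℕ} {i : Fin r → ℕ} :
    Antitone (Fin.cons k i : Fin (r + 1) → ℕ) ↔ Antitone i ∧ ∀ j, i j < k + 1 := by
  constructor
  · intro h
    refine ⟨fun a b hab => ?_, fun j => ?_⟩
    · simpa using h (Fin.succ_le_succ_iff.2 hab)
    · simpa [Nat.lt_succ_iff] using h (Fin.zero_le j.succ)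
  · rintro ⟨h, hk⟩ a b
    refine Fin.cases ?_ (fun a => ?_) a <;> refine Fin.cases ?_ (fun b => ?_) b <;> intro hab
    · simp
    · simpa using Nat.lt_succ_iff.1 (hk b)
    · simp at hab
    · simpa using h (Fin.succ_le_succ_iff.1 hab)

theorem finite_antitone_lt (r n : ℕ) : {i : Fin r → ℕ | Antitone i ∧ ∀ j, i j < n}.Finite :=
  (Set.Finite.pi' fun _ : Fin r => Set.finite_lt_nat n).subset fun _ hi => hi.2

theorem finsum_antitone_lt_eq_chainSum {R : Type*} [CommSemiring R] [NoZeroDivisors R] (r : ℕ)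
    (f : ℕ → ℕ → R) (n : ℕ) :
    ∑ᶠ i ∈ {i : Fin r → ℕ | Antitone i ∧ ∀ j, i j < n}, ∏ j : Fin r, f j (i j) =
      chainSum r f n := by
  induction r generalizing f n with
  | zero =>
    have : {i : Fin 0 → ℕ | Antitone i ∧ ∀ j, i j < n} = {Fin.elim0} := by
      ext i
      simp [Subsingleton.elim i Fin.elim0, Subsingleton.antitone]
    rw [this, finsum_mem_singleton]
    simp [chainSum]
  | succ r ih =>
    rw [finsum_mem_biUnion_image _ (Finset.range n)
      (fun k => {i : Fin r → ℕ | Antitone i ∧ ∀ j, i j < k + 1})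
      (e := fun k i => (Fin.cons k i : Fin (r + 1) → ℕ))
      (Fin.cons_injective2 (α := fun _ => ℕ)) _
      fun k _ => finite_antitone_lt r (k + 1)]
    · refine Finset.sum_congr rfl fun k _ => ?_
      simp_rw [Fin.prod_univ_succ, Fin.cons_zero, Fin.cons_succ]
      rw [← mul_finsum_mem, Fin.val_zero, ← ih]
      simp
    · ext i
      simp only [Set.mem_ofPred_eq, Set.mem_iUnion, Set.mem_image, Finset.coe_range, Set.mem_Iio,
        exists_prop]
      constructor
      · rintro ⟨h, hn⟩
        refine ⟨i 0, hn 0, Fin.tail i, antitone_cons_iff.1 ?_, Fin.cons_self_tail i⟩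
        rwa [Fin.cons_self_tail]
      · rintro ⟨k, hk, i, hi, rfl⟩
        refine ⟨antitone_cons_iff.2 hi, Fin.cases (by simpa using hk) fun j => ?_⟩
        have := hi.2 j
        rw [Fin.cons_succ]
        omega

theorem chainSum_add {R : Type*} [CommSemiring R] (r : ℕ) (f : ℕ → ℕ → R) (d n : ℕ) :
    chainSum r f (d + n) = ∑ l ∈ Finset.range (r + 1),
      chainSum (r - l) (fun j => f (l + j)) d * chainSum l (fun j k => f j (d + k)) n := by
  induction r generalizing f n with
  | zero => simp [chainSum]
  | succ r ih =>
    rw [chainSum, Finset.sum_range_add _ d n, Finset.sum_range_succ' _ (r + 1), add_comm]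
    congr 1
    · simp_rw [add_assoc d, ih, Finset.mul_sum]
      rw [Finset.sum_comm]
      refine Finset.sum_congr rfl fun l _ => ?_
      rw [chainSum, Finset.mul_sum, Nat.add_sub_add_right]
      refine Finset.sum_congr rfl fun k _ => ?_
      simp_rw [add_right_comm l 1]
      ring
    · simp [chainSum]

theorem finite_pi_finset_of_eventually_zero (l : ℕ) (s : ℕ → Finset ℕ) :
    {a : ℕ → ℕ | (∀ j < l, a j ∈ s j) ∧ ∀ j, l ≤ j → a j = 0}.Finite := by
  refine Set.Finite.of_injOn (f := fun a (j : Fin l) => a j)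
    (t := {b : Fin l → ℕ | ∀ j : Fin l, b j ∈ (s j : Set ℕ)})
    (fun a ha (j : Fin l) => ha.1 j j.2) ?_
    (Set.Finite.pi' fun j : Fin l => (s j).finite_toSet)
  intro a ha b hb hab
  funext j
  rcases lt_or_ge j l with h | h
  · exact congrFun hab ⟨j, h⟩
  · rw [ha.2 j h, hb.2 j h]

theorem chainSum_sum {R : Type*} [CommSemiring R] [NoZeroDivisors R] (l : ℕ) (s : ℕ → Finset ℕ)
    (c g : ℕ → ℕ → R) (n : ℕ) :
    chainSum l (fun j k => ∑ x ∈ s j, c j x * g x k) n =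
      ∑ᶠ a ∈ {a : ℕ → ℕ | (∀ j < l, a j ∈ s j) ∧ ∀ j, l ≤ j → a j = 0},
        (∏ j ∈ Finset.range l, c j (a j)) * chainSum l (fun j => g (a j)) n := by
  induction l generalizing s c n with
  | zero =>
    have : {a : ℕ → ℕ | (∀ j < 0, a j ∈ s j) ∧ ∀ j, 0 ≤ j → a j = 0} = {0} := by
      ext a
      simp [funext_iff]
    rw [this, finsum_mem_singleton]
    simp [chainSum]
  | succ l ih =>
    let e : ℕ → (ℕ → ℕ) → ℕ → ℕ := fun x a j => Nat.casesOn j x a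
    have he : Function.Injective2 e := fun x y a b h =>
      ⟨congrFun h 0, funext fun j => congrFun h (j + 1)⟩
    rw [finsum_mem_biUnion_image _ (s 0)
      (fun _ => {a : ℕ → ℕ | (∀ j < l, a j ∈ s (j + 1)) ∧ ∀ j, l ≤ j → a j = 0}) he _
      fun _ _ => finite_pi_finset_of_eventually_zero l fun j => s (j + 1)]
    · simp_rw [chainSum, ih (fun j => s (j + 1)), Finset.sum_mul]
      rw [Finset.sum_comm]
      refine Finset.sum_congr rfl fun x _ => ?_
      simp_rw [finsum_mem_eq_finite_toFinset_sum _
        (finite_pi_finset_of_eventually_zero l fun j => s (j + 1)), Finset.mul_sum]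
      rw [Finset.sum_comm]
      refine Finset.sum_congr rfl fun a _ => Finset.sum_congr rfl fun k _ => ?_
      rw [Finset.prod_range_succ']
      have e_zero : e x a 0 = x := rfl
      have e_succ (j : ℕ) : e x a (j + 1) = a j := rfl
      simp only [e_zero, e_succ]
      ring
    · ext a
      simp only [Set.mem_ofPred_eq, Set.mem_iUnion, Set.mem_image, Finset.mem_coe, exists_prop]
      constructor
      · rintro ⟨h, h0⟩
        exact ⟨a 0, h 0 l.succ_pos, fun j => a (j + 1),
          ⟨fun j hj => h (j + 1) (by omega), fun j hj => h0 (j + 1) (by omega)⟩,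
          funext fun j => by cases j <;> rfl⟩
      · rintro ⟨x, hx, a, ⟨h, h0⟩, rfl⟩
        refine ⟨fun j hj => ?_, fun j hj => ?_⟩
        · cases j with
          | zero => exact hx
          | succ j => exact h j (by omega)
        · cases j with
          | zero => omega
          | succ j => exact h0 j (by omega)

section PowerSum

variable {F : Type*} [Field F] [Fintype F]

theorem finite_degree_lt (n : ℕ) : {p : F[X] | p.degree < n}.Finite := by
  have : Finite (degreeLT F n) := Finite.of_equiv _ (degreeLTEquiv F n).toEquiv.symm
  exact (Set.toFinite (degreeLT F n : Set F[X])).subset fun p hp => mem_degreeLT.2 hp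

theorem finite_monic_natDegree_eq (i : ℕ) : {n : F[X] | n.Monic ∧ n.natDegree = i}.Finite :=
  (finite_degree_lt (i + 1)).subset fun n hn =>
    degree_lt_iff_coeff_zero n (i + 1) |>.2 fun k hk =>
      coeff_eq_zero_of_natDegree_lt (by have := hn.2; omega)

theorem finsum_degree_lt_pow_zero {d : ℕ} (hd : 0 < d) :
    ∑ᶠ c ∈ {c : F[X] | c.degree < d}, c ^ 0 = 0 := by
  have h : Nat.card {c : F[X] | c.degree < d} = Fintype.card F ^ d := by
    have e : {c : F[X] | c.degree < d} = (degreeLT F d : Set F[X]) := by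
      ext c; simp [mem_degreeLT]
    rw [e]
    simpa using Nat.card_congr (degreeLTEquiv F d).toEquiv
  rw [finsum_mem_eq_finite_toFinset_sum _ (finite_degree_lt d)]
  simp only [pow_zero, Finset.sum_const, nsmul_eq_mul, mul_one]
  rw [← Set.ncard_eq_toFinset_card _ (finite_degree_lt d), ← Nat.card_coe_set_eq, h,
    ← map_natCast (C : F →+* F[X]), Nat.cast_pow, FiniteField.cast_card_eq_zero, zero_pow hd.ne', map_zero]

theorem zetaLtOne_eq_finsum (d m : ℕ) :
    zetaLtOne F d m = ∑ᶠ n ∈ {n : F[X] | n.Monic ∧ n.natDegree < d}, n ^ m := by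
  have : {n : F[X] | n.Monic ∧ n.natDegree < d} =
      ⋃ i ∈ {i : ℕ | i < d}, {n : F[X] | n.Monic ∧ n.natDegree = i} := by
    ext n
    simp
  rw [this, finsum_mem_biUnion _ (Set.finite_lt_nat d) fun i _ => finite_monic_natDegree_eq i]
  · rfl
  · rintro i - j - hij
    exact Set.disjoint_left.2 fun n hi hj => hij (hi.2.symm.trans hj.2)

theorem finsum_degree_lt_pow {d m : ℕ} (hm : m ≠ 0) :
    ∑ᶠ c ∈ {c : F[X] | c.degree < d}, c ^ m =
      if Fintype.card F - 1 ∣ m then -zetaLtOne F d m else 0 := by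
  classical
  have hfin : {n : F[X] | n.Monic ∧ n.natDegree < d}.Finite :=
    (finite_degree_lt d).subset fun n hn => by
      simpa [degree_eq_natDegree hn.1.ne_zero] using hn.2
  have h0 : ∑ᶠ c ∈ {c : F[X] | c.degree < d}, c ^ m =
      ∑ᶠ c ∈ {c : F[X] | c ≠ 0 ∧ c.natDegree < d}, c ^ m := by
    refine finsum_mem_inter_support_eq _ _ _ (Set.ext fun c => ?_)
    simp only [Set.mem_inter_iff, Set.mem_ofPred_eq, Function.mem_support]
    by_cases hc : c = 0
    · simp [hc, hm]
    · simp [hc, degree_eq_natDegree hc]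
  have himage : {c : F[X] | c ≠ 0 ∧ c.natDegree < d} =
      ⋃ u ∈ ((Finset.univ : Finset Fˣ) : Set Fˣ),
        (fun n : F[X] => C (u : F) * n) '' {n : F[X] | n.Monic ∧ n.natDegree < d} := by
    ext c
    simp only [Set.mem_ofPred_eq, Finset.coe_univ, Set.mem_univ, Set.iUnion_true, Set.mem_iUnion,
      Set.mem_image]
    constructor
    · rintro ⟨hc, hcd⟩
      have hl := leadingCoeff_ne_zero.2 hc
      refine ⟨Units.mk0 _ hl, C c.leadingCoeff⁻¹ * c, ⟨?_, ?_⟩, ?_⟩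
      · simp [Monic, hl]
      · rwa [natDegree_C_mul (inv_ne_zero hl)]
      · rw [Units.val_mk0, ← mul_assoc, ← C_mul, mul_inv_cancel₀ hl, C_1, one_mul]
    · rintro ⟨u, n, ⟨hn, hnd⟩, rfl⟩
      exact ⟨mul_ne_zero (C_ne_zero.2 u.ne_zero) hn.ne_zero, by
        rwa [natDegree_C_mul u.ne_zero]⟩
  rw [h0, himage, finsum_mem_biUnion, finsum_mem_coe_finset]
  · have hu (u : Fˣ) : ∑ᶠ c ∈ (fun n : F[X] => C (u : F) * n) ''
        {n : F[X] | n.Monic ∧ n.natDegree < d}, c ^ m = C ((u : F) ^ m) * zetaLtOne F d m := by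
      rw [finsum_mem_image (mul_right_injective₀ (C_ne_zero.2 u.ne_zero)).injOn,
        zetaLtOne_eq_finsum, mul_finsum_mem]
      simp_rw [mul_pow, C_pow]
    simp_rw [hu]
    rw [← Finset.sum_mul, ← map_sum, FiniteField.sum_pow_units]
    split_ifs <;> simp
  · rintro u - w - huw
    refine Set.disjoint_left.2 ?_
    rintro _ ⟨n, hn, rfl⟩ ⟨n', hn', h⟩
    have := congrArg leadingCoeff h
    simp [hn.1.leadingCoeff, hn'.1.leadingCoeff] at this
    exact huw (Units.ext this.symm)
  · exact Finset.finite_toSet _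
  · exact fun u _ => hfin.image _

theorem powerSum_natDegree_add {v : F[X]} (hv : v.Monic) (hd : 0 < v.natDegree) (i m : ℕ) :
    powerSum F (v.natDegree + i) m =
      ∑ a ∈ (Finset.range m).filter (fun a => Fintype.card F - 1 ∣ m - a),
        -(v ^ a * (zetaLtOne F v.natDegree (m - a) * (m.choose a : F[X]))) * powerSum F i a := by
  classical
  have hbij : powerSum F (v.natDegree + i) m =
      ∑ p ∈ (finite_monic_natDegree_eq (F := F) i).toFinset ×ˢ
        (finite_degree_lt (F := F) v.natDegree).toFinset, (v * p.1 + p.2) ^ m := by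
    rw [powerSum, finsum_mem_eq_finite_toFinset_sum _ (finite_monic_natDegree_eq _)]
    symm
    have hdeg {b c : F[X]} (hb : b.Monic) (hc : c.degree < v.natDegree) :
        c.degree < (v * b).degree := by
      rw [degree_eq_natDegree (hv.mul hb).ne_zero, hv.natDegree_mul hb]
      exact hc.trans_le (by exact_mod_cast Nat.le_add_right _ _)
    refine Finset.sum_bij' (fun p _ => v * p.1 + p.2) (fun n _ => (n /ₘ v, n %ₘ v)) ?_ ?_ ?_ ?_ ?_
    · rintro ⟨b, c⟩ h
      simp only [Finset.mem_product, Set.Finite.mem_toFinset, Set.mem_ofPred_eq] at h ⊢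
      obtain ⟨⟨hb, rfl⟩, hc⟩ := h
      exact ⟨(hv.mul hb).add_of_left (hdeg hb hc), by
        rw [natDegree_add_eq_left_of_degree_lt (hdeg hb hc), hv.natDegree_mul hb]⟩
    · intro n h
      simp only [Finset.mem_product, Set.Finite.mem_toFinset, Set.mem_ofPred_eq] at h ⊢
      refine ⟨⟨?_, ?_⟩, ?_⟩
      · rw [Monic, leadingCoeff_divByMonic_of_monic hv, h.1]
        rw [degree_eq_natDegree hv.ne_zero, degree_eq_natDegree h.1.ne_zero, h.2]
        exact_mod_cast Nat.le_add_right _ _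
      · rw [natDegree_divByMonic _ hv, h.2, Nat.add_sub_cancel_left]
      · rw [← degree_eq_natDegree hv.ne_zero]
        exact degree_modByMonic_lt n hv
    · rintro ⟨b, c⟩ h
      simp only [Finset.mem_product, Set.Finite.mem_toFinset, Set.mem_ofPred_eq] at h
      have := div_modByMonic_unique (f := v * b + c) b c hv
        ⟨add_comm _ _, by rw [degree_eq_natDegree hv.ne_zero]; exact h.2⟩
      simp [this.1, this.2]
    · intro n _
      simpa [add_comm] using modByMonic_add_div n v
    · simp
  have hexp : powerSum F (v.natDegree + i) m = ∑ a ∈ Finset.range (m + 1),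
      v ^ a * (m.choose a : F[X]) * powerSum F i a *
        ∑ᶠ c ∈ {c : F[X] | c.degree < v.natDegree}, c ^ (m - a) := by
    rw [hbij, Finset.sum_product]
    simp_rw [add_pow, powerSum, finsum_mem_eq_finite_toFinset_sum _ (finite_monic_natDegree_eq _),
      finsum_mem_eq_finite_toFinset_sum _ (finite_degree_lt _), Finset.mul_sum, Finset.sum_mul]
    rw [Finset.sum_comm_cycle]
    refine Finset.sum_congr rfl fun a _ => ?_
    rw [Finset.sum_comm]
    refine Finset.sum_congr rfl fun c _ => Finset.sum_congr rfl fun b _ => ?_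
    rw [mul_pow]
    ring
  rw [hexp, Finset.sum_range_succ, Nat.sub_self, finsum_degree_lt_pow_zero hd, mul_zero, add_zero,
    Finset.sum_filter]
  refine Finset.sum_congr rfl fun a ha => ?_
  rw [finsum_degree_lt_pow (Nat.sub_ne_zero_of_lt (Finset.mem_range.1 ha))]
  split_ifs
  · ring
  · rw [mul_zero]

theorem powerSum_eq_zero_of_lt {i m : ℕ} (h : m < i) : powerSum F i m = 0 := by
  induction m using Nat.strong_induction_on generalizing i with
  | _ m ih =>
    obtain ⟨i, rfl⟩ : ∃ k, i = (X : F[X]).natDegree + k := ⟨i - 1, by rw [natDegree_X]; omega⟩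
    rw [powerSum_natDegree_add monic_X (by simp)]
    refine Finset.sum_eq_zero fun a ha => ?_
    rw [natDegree_X] at h
    have ha' := Finset.mem_range.1 (Finset.mem_filter.1 ha).1
    rw [ih a ha' (by omega), mul_zero]

theorem zetaLtStar_eq_chainSum (d r : ℕ) (m : ℕ → ℕ) :
    zetaLtStar F d r m = chainSum r (fun j k => powerSum F k (m j)) d :=
  finsum_antitone_lt_eq_chainSum r (fun j k => powerSum F k (m j)) d

theorem zetaInfStar_eq_chainSum {r n : ℕ} {m : ℕ → ℕ} (hn : ∀ j < r, m j < n) :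
    zetaInfStar F r m = chainSum r (fun j k => powerSum F k (m j)) n := by
  rw [← finsum_antitone_lt_eq_chainSum, zetaInfStar]
  refine finsum_mem_inter_support_eq _ _ _ (Set.ext fun i => ?_)
  simp only [Set.mem_inter_iff, Set.mem_ofPred_eq, Function.mem_support, and_congr_left_iff,
    iff_self_and]
  intro h _ j
  by_contra! hj
  exact h (Finset.prod_eq_zero (Finset.mem_univ j)
    (powerSum_eq_zero_of_lt ((hn j j.2).trans_le hj)))

end PowerSum

/-- Recursive formula for ∞-adic multiple zeta star values at negative integers.
The inner sum runs over tuples `(a_1, …, a_l)` (encoded as functions `a : ℕ → ℕ`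
vanishing from index `l` on) with `0 ≤ a_j < m_j` and `(q-1) ∣ (m_j - a_j)`. -/
theorem zetaInfStar_recursive (F : Type*) [Field F] [Fintype F] (v : Polynomial F)
    (hv : v.Monic) (hvirr : Irreducible v) (hd : 0 < v.natDegree) (r : ℕ) (hr : 1 ≤ r)
    (m : ℕ → ℕ) :
    zetaInfStar F r m =
      ∑ l ∈ Finset.range (r + 1),
        (-1 : Polynomial F) ^ l * zetaLtStar F v.natDegree (r - l) (fun j => m (l + j)) *
          ∑ᶠ a ∈ {a : ℕ → ℕ |
              (∀ j < l, a j < m j ∧ (Fintype.card F - 1) ∣ (m j - a j)) ∧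
                ∀ j, l ≤ j → a j = 0},
            v ^ (∑ j ∈ Finset.range l, a j) *
              (∏ j ∈ Finset.range l,
                zetaLtOne F v.natDegree (m j - a j) * (Nat.choose (m j) (a j) : Polynomial F)) *
              zetaInfStar F l a := by
  let M := (Finset.range r).sup m + 1
  have hM (j : ℕ) (hj : j < r) : m j < M :=
    Nat.lt_succ_of_le (Finset.le_sup (f := m) (Finset.mem_range.2 hj))
  rw [zetaInfStar_eq_chainSum (n := v.natDegree + M) fun j hj =>
      (hM j hj).trans_le (Nat.le_add_left _ _),
    chainSum_add]
  refine Finset.sum_congr rfl fun l hl => ?_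
  have hlr : l ≤ r := Nat.lt_succ_iff.1 (Finset.mem_range.1 hl)
  simp_rw [powerSum_natDegree_add hv hd]
  rw [chainSum_sum l
    (fun j => (Finset.range (m j)).filter fun a => Fintype.card F - 1 ∣ m j - a)
    (fun j a => -(v ^ a * (zetaLtOne F v.natDegree (m j - a) * ((m j).choose a : F[X]))))
    (fun a k => powerSum F k a),
    zetaLtStar_eq_chainSum, mul_comm ((-1) ^ l), mul_assoc]
  congr 1
  rw [mul_finsum_mem]
  simp only [Finset.mem_filter, Finset.mem_range]
  refine finsum_mem_congr rfl fun a ha => ?_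
  rw [zetaInfStar_eq_chainSum (n := M) fun j hj =>
      ((ha.1 j hj).1.trans (hM j (hj.trans_le hlr))),
    Finset.prod_neg, Finset.prod_mul_distrib, Finset.prod_pow_eq_pow_sum, Finset.card_range]
  ring
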